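/- Let Ξ be a measurable space, P̂ a probability measure on Ξ, 𝒫 a nonempty set of probability measures on Ξ, X a nonempty subset of a real normed vector space, and f : X × Ξ → ℝ such that for every x ∈ X the function f(x,·) is integrable with respect to P̂ and with respect to every Q ∈ 𝒫, and there is C ≥ 0 with |∫ f(x,·) dP̂| ≤ C and |∫ f(x,·) dQ| ≤ C for all x ∈ X, Q ∈ 𝒫. For θ ∈ [0,1] let 𝒫'_θ := {(1−θ)·P̂ + θ·Q : Q ∈ 𝒫}, v(θ) := inf_{x∈X} sup_{P∈𝒫'_θ} ∫ f(x,·) dP, and X̂(θ) := {x ∈ X : sup_{P∈𝒫'_θ} ∫ f(x,·) dP = v(θ)}. Fix θ₁, θ₂ ∈ [0,1] with X̂(θ₁) and X̂(θ₂) nonempty, and suppose a second-order growth condition holds at θ₁: there is τ > 0 such that sup_{P∈𝒫'_{θ₁}} ∫ f(x,·) dP ≥ v(θ₁) + τ·(inf_{y∈X̂(θ₁)} ‖x−y‖)² for all x ∈ X. Then sup_{x∈X̂(θ₂)} inf_{y∈X̂(θ₁)} ‖x−y‖ ≤ √(6C·τ⁻¹·|θ₁−θ₂|). -/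

import Mathlib

/-!
Along the mixtures, each expectation is affine in `θ`, with slope the difference of the expectations
under `Q` and `P̂`. This slope is at most `2C` in absolute value, uniformly in `Q` and `x`, so the
worst-case objectives at `θ₁` and `θ₂` differ by at most `δ = 2C|θ₁ - θ₂|` on `X`. A minimizer of
one of two `δ`-close functions is `2δ`-optimal for the other, and quadratic growth turns this into
`τ d² ≤ 2δ`. The constant that results is `4C`, better than `6C`.
-/

open MeasureTheory

/-- The mixture `(1-θ)·P + θ·Q` of two measures. -/
noncomputable def mix {Ξ : Type*} [MeasurableSpace Ξ] (θ : ℝ) (P Q : Measure Ξ) : Measure Ξ :=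
  ENNReal.ofReal (1 - θ) • P + ENNReal.ofReal θ • Q

section Stability

variable {E : Type*} {φ ψ : E → ℝ} {X : Set E}

/-- The solution set `argmin_X φ`, expressed by comparison of values, so that it does not refer to
the infimum of `φ`, which is a junk value for unbounded `φ`. -/
def minimizersOn (φ : E → ℝ) (X : Set E) : Set E :=
  {x ∈ X | IsMinOn φ X x}

theorem minimizersOn_eq_setOf_eq_iInf (hφ : BddBelow (φ '' X)) :
    minimizersOn φ X = {x ∈ X | φ x = ⨅ y : X, φ y} := by
  ext x
  refine and_congr_right fun hx => ⟨fun hmin => (hmin.iInf_eq hx).symm, fun heq => ?_⟩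
  exact isMinOn_iff.2 fun y hy => heq.trans_le (ciInf_set_le hφ hy)

variable [PseudoMetricSpace E] {τ : ℝ}

/-- The second-order growth condition with modulus `τ` at the solution set of `min_X φ`. The optimal
value is represented by the value of `φ` at an arbitrary solution. -/
def QuadraticGrowthOn (τ : ℝ) (φ : E → ℝ) (X : Set E) : Prop :=
  ∀ a ∈ minimizersOn φ X, ∀ x ∈ X, φ a + τ * Metric.infDist x (minimizersOn φ X) ^ 2 ≤ φ x

theorem quadraticGrowthOn_of_iInf_add_le
    (h : ∀ x ∈ X, (⨅ y : X, φ y) + τ * Metric.infDist x (minimizersOn φ X) ^ 2 ≤ φ x) :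
    QuadraticGrowthOn τ φ X := by
  rintro a ⟨haX, hamin⟩ x hx
  rw [← hamin.iInf_eq haX]
  exact h x hx

theorem QuadraticGrowthOn.infDist_le_sqrt {δ : ℝ} (hgrowth : QuadraticGrowthOn τ φ X) (hτ : 0 < τ)
    (hφ : (minimizersOn φ X).Nonempty) (hclose : ∀ x ∈ X, |φ x - ψ x| ≤ δ) :
    ∀ x ∈ minimizersOn ψ X, Metric.infDist x (minimizersOn φ X) ≤ √(2 * δ / τ) := by
  rintro x ⟨hxX, hxmin⟩
  obtain ⟨a, ha⟩ := hφ
  refine Real.le_sqrt_of_sq_le ((le_div_iff₀' hτ).2 ?_)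
  calc τ * Metric.infDist x (minimizersOn φ X) ^ 2
      ≤ φ x - φ a := le_sub_iff_add_le'.2 (hgrowth a ha x hxX)
    _ = (φ x - ψ x) + (ψ x - ψ a) + (ψ a - φ a) := by ring
    _ ≤ δ + 0 + δ := by
        gcongr
        · exact (le_abs_self _).trans (hclose x hxX)
        · exact sub_nonpos.2 (hxmin ha.1)
        · exact (le_abs_self _).trans (abs_sub_comm (φ a) _ ▸ hclose a ha.1)
    _ = 2 * δ := by ring

end Stability

theorem abs_ciSup_sub_ciSup_le {ι : Type*} [Nonempty ι] {u w : ι → ℝ} {δ : ℝ}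
    (hu : BddAbove (Set.range u)) (hw : BddAbove (Set.range w)) (h : ∀ i, |u i - w i| ≤ δ) :
    |(⨆ i, u i) - ⨆ i, w i| ≤ δ := by
  refine abs_sub_le_iff.2 ⟨sub_le_iff_le_add.2 (ciSup_le fun i => ?_),
    sub_le_iff_le_add.2 (ciSup_le fun i => ?_)⟩
  · linarith [le_ciSup hw i, (abs_sub_le_iff.1 (h i)).1]
  · linarith [le_ciSup hu i, (abs_sub_le_iff.1 (h i)).2]

section Mixture

variable {Ξ : Type*} [MeasurableSpace Ξ] {P : Measure Ξ} {θ : ℝ}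

theorem mix_zero (P Q : Measure Ξ) : mix 0 P Q = P := by
  simp [mix]

theorem integral_mix {G : Type*} [NormedAddCommGroup G] [NormedSpace ℝ G] {Q : Measure Ξ}
    {g : Ξ → G} (hθ : θ ∈ Set.Icc (0 : ℝ) 1) (hP : Integrable g P) (hQ : Integrable g Q) :
    ∫ ξ, g ξ ∂mix θ P Q = (1 - θ) • ∫ ξ, g ξ ∂P + θ • ∫ ξ, g ξ ∂Q := by
  rw [mix, integral_add_measure (hP.smul_measure ENNReal.ofReal_ne_top)
      (hQ.smul_measure ENNReal.ofReal_ne_top), integral_smul_measure, integral_smul_measure,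
    ENNReal.toReal_ofReal (sub_nonneg.2 hθ.2), ENNReal.toReal_ofReal hθ.1]

variable {Q : Measure Ξ} {𝒜 : Set (Measure Ξ)} {g : Ξ → ℝ} {K η : ℝ}

theorem abs_integral_mix_sub_integral_mix_le (hθ : θ ∈ Set.Icc (0 : ℝ) 1)
    (hη : η ∈ Set.Icc (0 : ℝ) 1) (hP : Integrable g P) (hQ : Integrable g Q)
    (hK : |∫ ξ, g ξ ∂Q - ∫ ξ, g ξ ∂P| ≤ K) :
    |∫ ξ, g ξ ∂mix θ P Q - ∫ ξ, g ξ ∂mix η P Q| ≤ K * |θ - η| := by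
  have hslope : ∫ ξ, g ξ ∂mix θ P Q - ∫ ξ, g ξ ∂mix η P Q =
      (∫ ξ, g ξ ∂Q - ∫ ξ, g ξ ∂P) * (θ - η) := by
    rw [integral_mix hθ hP hQ, integral_mix hη hP hQ]
    simp only [smul_eq_mul]
    ring
  rw [hslope, abs_mul]
  gcongr

/-- The inner supremum of the TRO model: the largest expectation of `g` over the mixtures of `P`
with members of `𝒜`. -/
noncomputable def worstCaseMean (P : Measure Ξ) (𝒜 : Set (Measure Ξ)) (θ : ℝ) (g : Ξ → ℝ) : ℝ :=
  ⨆ Q : 𝒜, ∫ ξ, g ξ ∂mix θ P Q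

theorem worstCaseMean_zero (h𝒜 : 𝒜.Nonempty) : worstCaseMean P 𝒜 0 g = ∫ ξ, g ξ ∂P := by
  have := h𝒜.to_subtype
  simp only [worstCaseMean, mix_zero, ciSup_const]

theorem bddAbove_range_integral_mix (hθ : θ ∈ Set.Icc (0 : ℝ) 1) (hP : Integrable g P)
    (h𝒜int : ∀ Q ∈ 𝒜, Integrable g Q) (hK : ∀ Q ∈ 𝒜, |∫ ξ, g ξ ∂Q - ∫ ξ, g ξ ∂P| ≤ K) :
    BddAbove (Set.range fun Q : 𝒜 => ∫ ξ, g ξ ∂mix θ P Q) := by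
  refine ⟨K * |θ - 0| + ∫ ξ, g ξ ∂P, Set.forall_mem_range.2 fun Q => ?_⟩
  have hdiff := abs_integral_mix_sub_integral_mix_le hθ (Set.left_mem_Icc.2 zero_le_one) hP
    (h𝒜int Q Q.2) (hK Q Q.2)
  rw [mix_zero] at hdiff
  exact sub_le_iff_le_add.1 ((le_abs_self _).trans hdiff)

theorem abs_worstCaseMean_sub_worstCaseMean_le (h𝒜 : 𝒜.Nonempty) (hθ : θ ∈ Set.Icc (0 : ℝ) 1)
    (hη : η ∈ Set.Icc (0 : ℝ) 1) (hP : Integrable g P) (h𝒜int : ∀ Q ∈ 𝒜, Integrable g Q)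
    (hK : ∀ Q ∈ 𝒜, |∫ ξ, g ξ ∂Q - ∫ ξ, g ξ ∂P| ≤ K) :
    |worstCaseMean P 𝒜 θ g - worstCaseMean P 𝒜 η g| ≤ K * |θ - η| := by
  have := h𝒜.to_subtype
  exact abs_ciSup_sub_ciSup_le (bddAbove_range_integral_mix hθ hP h𝒜int hK)
    (bddAbove_range_integral_mix hη hP h𝒜int hK) fun Q =>
      abs_integral_mix_sub_integral_mix_le hθ hη hP (h𝒜int Q Q.2) (hK Q Q.2)

variable {E : Type*} {X : Set E} {f : E → Ξ → ℝ}

theorem bddBelow_image_worstCaseMean (h𝒜 : 𝒜.Nonempty) (hθ : θ ∈ Set.Icc (0 : ℝ) 1)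
    (hP : ∀ x ∈ X, Integrable (f x) P) (h𝒜int : ∀ x ∈ X, ∀ Q ∈ 𝒜, Integrable (f x) Q)
    (hK : ∀ x ∈ X, ∀ Q ∈ 𝒜, |∫ ξ, f x ξ ∂Q - ∫ ξ, f x ξ ∂P| ≤ K)
    (hbdd : BddBelow ((fun x => ∫ ξ, f x ξ ∂P) '' X)) :
    BddBelow ((fun x => worstCaseMean P 𝒜 θ (f x)) '' X) := by
  obtain ⟨m, hm⟩ := hbdd
  refine ⟨m - K * |θ - 0|, Set.forall_mem_image.2 fun x hx => ?_⟩
  have hdiff := abs_worstCaseMean_sub_worstCaseMean_le h𝒜 hθ (Set.left_mem_Icc.2 zero_le_one)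
    (hP x hx) (h𝒜int x hx) (hK x hx)
  rw [worstCaseMean_zero h𝒜] at hdiff
  linarith [hm (Set.mem_image_of_mem _ hx), (abs_sub_le_iff.1 hdiff).2]

theorem tro_optimal_solutions_holder_general [PseudoMetricSpace E] {θ₁ θ₂ τ : ℝ} (h𝒜 : 𝒜.Nonempty)
    (hP : ∀ x ∈ X, Integrable (f x) P) (h𝒜int : ∀ x ∈ X, ∀ Q ∈ 𝒜, Integrable (f x) Q)
    (hK : ∀ x ∈ X, ∀ Q ∈ 𝒜, |∫ ξ, f x ξ ∂Q - ∫ ξ, f x ξ ∂P| ≤ K)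
    (hθ₁ : θ₁ ∈ Set.Icc (0 : ℝ) 1) (hθ₂ : θ₂ ∈ Set.Icc (0 : ℝ) 1) (hτ : 0 < τ)
    (hne : (minimizersOn (fun x => worstCaseMean P 𝒜 θ₁ (f x)) X).Nonempty)
    (hgrowth : QuadraticGrowthOn τ (fun x => worstCaseMean P 𝒜 θ₁ (f x)) X) :
    ∀ x ∈ minimizersOn (fun x => worstCaseMean P 𝒜 θ₂ (f x)) X,
      Metric.infDist x (minimizersOn (fun x => worstCaseMean P 𝒜 θ₁ (f x)) X) ≤
        √(2 * (K * |θ₁ - θ₂|) / τ) :=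
  hgrowth.infDist_le_sqrt hτ hne fun x hx =>
    abs_worstCaseMean_sub_worstCaseMean_le h𝒜 hθ₁ hθ₂ (hP x hx) (h𝒜int x hx) (hK x hx)

end Mixture

/-- Hölder continuity (exponent 1/2) of the set of optimal solutions of the TRO model under
a second-order growth condition: `D(X̂(θ₂), X̂(θ₁)) ≤ √(6C·τ⁻¹·|θ₁ − θ₂|)`. -/
theorem tro_optimal_solutions_holder
    {Ξ E : Type*} [MeasurableSpace Ξ] [NormedAddCommGroup E] [NormedSpace ℝ E]
    (X : Set E) (hXne : X.Nonempty)
    (Phat : Measure Ξ) [IsProbabilityMeasure Phat]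
    (𝒜 : Set (Measure Ξ)) (h𝒜ne : 𝒜.Nonempty)
    (h𝒜prob : ∀ Q ∈ 𝒜, IsProbabilityMeasure Q)
    (f : E → Ξ → ℝ)
    (hint0 : ∀ x ∈ X, Integrable (f x) Phat)
    (hint : ∀ x ∈ X, ∀ Q ∈ 𝒜, Integrable (f x) Q)
    (C : ℝ) (hC : 0 ≤ C)
    (hb0 : ∀ x ∈ X, |∫ ξ, f x ξ ∂Phat| ≤ C)
    (hb : ∀ x ∈ X, ∀ Q ∈ 𝒜, |∫ ξ, f x ξ ∂Q| ≤ C)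
    (v : ℝ → ℝ) (Xhat : ℝ → Set E)
    (hv : ∀ θ, v θ = ⨅ x : X, ⨆ Q : 𝒜, ∫ ξ, f (x : E) ξ ∂(mix θ Phat (Q : Measure Ξ)))
    (hXhat : ∀ θ, Xhat θ =
      {x ∈ X | (⨆ Q : 𝒜, ∫ ξ, f x ξ ∂(mix θ Phat (Q : Measure Ξ))) = v θ})
    (θ₁ θ₂ : ℝ) (hθ₁ : θ₁ ∈ Set.Icc (0:ℝ) 1) (hθ₂ : θ₂ ∈ Set.Icc (0:ℝ) 1)
    (hne1 : (Xhat θ₁).Nonempty) (hne2 : (Xhat θ₂).Nonempty)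
    (τ : ℝ) (hτ : 0 < τ)
    (growth : ∀ x ∈ X, v θ₁ + τ * (⨅ y : Xhat θ₁, ‖x - (y : E)‖) ^ 2 ≤
      ⨆ Q : 𝒜, ∫ ξ, f x ξ ∂(mix θ₁ Phat (Q : Measure Ξ))) :
    (⨆ x : Xhat θ₂, ⨅ y : Xhat θ₁, ‖(x : E) - (y : E)‖) ≤
      Real.sqrt (6 * C * τ⁻¹ * |θ₁ - θ₂|) := by
  have hK : ∀ x ∈ X, ∀ Q ∈ 𝒜, |∫ ξ, f x ξ ∂Q - ∫ ξ, f x ξ ∂Phat| ≤ 2 * C := fun x hx Q hQ => by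
    linarith [abs_sub (∫ ξ, f x ξ ∂Q) (∫ ξ, f x ξ ∂Phat), hb0 x hx, hb x hx Q hQ]
  have hbdd : BddBelow ((fun x => ∫ ξ, f x ξ ∂Phat) '' X) :=
    ⟨-C, Set.forall_mem_image.2 fun x hx => neg_le_of_abs_le (hb0 x hx)⟩
  have hmin : ∀ θ ∈ Set.Icc (0 : ℝ) 1,
      Xhat θ = minimizersOn (fun x => worstCaseMean Phat 𝒜 θ (f x)) X := fun θ hθ => by
    rw [hXhat, hv, minimizersOn_eq_setOf_eq_iInf
      (bddBelow_image_worstCaseMean h𝒜ne hθ hint0 hint hK hbdd)]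
    rfl
  simp only [← dist_eq_norm, ← Metric.infDist_eq_iInf] at growth ⊢
  rw [hmin θ₁ hθ₁] at hne1 ⊢
  rw [hv, hmin θ₁ hθ₁] at growth
  refine Real.iSup_le (fun x => ?_) (Real.sqrt_nonneg _)
  refine (tro_optimal_solutions_holder_general h𝒜ne hint0 hint hK hθ₁ hθ₂ hτ hne1
    (quadraticGrowthOn_of_iInf_add_le growth) x (hmin θ₂ hθ₂ ▸ x.2)).trans (Real.sqrt_le_sqrt ?_)
  calc 2 * (2 * C * |θ₁ - θ₂|) / τ = 4 * C * τ⁻¹ * |θ₁ - θ₂| := by ring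
    _ ≤ 6 * C * τ⁻¹ * |θ₁ - θ₂| := by gcongr; norm_num
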